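/- There exists δ > 0 such that lim_{L→∞} P_{unif,L}( there exists an index i with δ log L ≤ i ≤ γ_L(π) and E_i(π) = 1 ) = 0. In words: with probability tending to 1, none of the excursions of the uniform prudent walk beyond the first δ log L ones crosses the range of the walk. -/

import Mathlib

open Filter Set

/-- One admissible step of a nearest-neighbour walk on `ℤ²`. -/
def IsStep (s : ℤ × ℤ) : Prop :=
  s = (1, 0) ∨ s = (-1, 0) ∨ s = (0, 1) ∨ s = (0, -1)

/-- The set `Ω_L` of prudent paths of length `L`. -/
def prudentSet (L : ℕ) : Set (Fin (L + 1) → ℤ × ℤ) :=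
  {π | π 0 = (0, 0) ∧ ∀ i : Fin L,
    IsStep (π i.succ - π i.castSucc) ∧
    ∀ k : ℕ, 1 ≤ k → ∀ j : Fin (L + 1), j ≤ i.castSucc →
      π i.castSucc + (k : ℤ) • (π i.succ - π i.castSucc) ≠ π j}

/-- The uniform probability of a set `A` of paths under `P_{unif,L}`. -/
noncomputable def probUnif (L : ℕ) (A : Set (Fin (L + 1) → ℤ × ℤ)) : ℝ :=
  (Nat.card ↥(A ∩ prudentSet L) : ℝ) / (Nat.card ↥(prudentSet L) : ℝ)

/-- Coercion `ℤ² → ℝ²`. -/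
def toR (p : ℤ × ℤ) : ℝ × ℝ := ((p.1 : ℝ), (p.2 : ℝ))

/-- The rescaled interpolated path `π̃^L : [0,1] → ℝ²`. -/
noncomputable def rescaled (L : ℕ) (π : Fin (L + 1) → ℤ × ℤ) (t : ℝ) : ℝ × ℝ :=
  let n : ℕ := ⌊t * L⌋₊
  let p : ℝ × ℝ := toR (π ⟨min n L, by omega⟩)
  let q : ℝ × ℝ := toR (π ⟨min (n + 1) L, by omega⟩)
  (L : ℝ)⁻¹ • (p + (t * L - (n : ℝ)) • (q - p))

/-- Euclidean norm on `ℝ²`. -/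
noncomputable def enorm2 (v : ℝ × ℝ) : ℝ := Real.sqrt (v.1 ^ 2 + v.2 ^ 2)

/-- The four diagonal directions. -/
def evec : ℕ → ℝ × ℝ
  | 1 => (1, 1)
  | 2 => (-1, 1)
  | 3 => (-1, -1)
  | 4 => (1, -1)
  | _ => (0, 0)
/-- `H_t(π)`: the height of the range of `π` up to time `t` (the time is clamped to `L`). -/
noncomputable def heightAt (L : ℕ) (π : Fin (L + 1) → ℤ × ℤ) (t : ℕ) : ℕ :=
  ((Finset.Iic (⟨min t L, by omega⟩ : Fin (L + 1))).image (fun i => (π i).2)).card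

/-- `W_t(π)`: the width of the range of `π` up to time `t` (the time is clamped to `L`). -/
noncomputable def widthAt (L : ℕ) (π : Fin (L + 1) → ℤ × ℤ) (t : ℕ) : ℕ :=
  ((Finset.Iic (⟨min t L, by omega⟩ : Fin (L + 1))).image (fun i => (π i).1)).card

open Classical in
/-- `min{t ∈ (a, L] : f(t) > f(t−1)} − 1`, or `none` if no such time exists. -/
noncomputable def nextTime (L : ℕ) (f : ℕ → ℕ) (a : ℕ) : Option ℕ :=
  if h : ∃ t : ℕ, a < t ∧ t ≤ L ∧ f (t - 1) < f t then some (Nat.find h - 1) else none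

/-- The sequence `s_0 = 0 ≤ s_1 ≤ s_2 ≤ ⋯` of excursion endpoints of `π`
(`s_{2k+1} = ρ_{k+1}` is obtained from the height, `s_{2k+2} = υ_{k+1}` from the width);
`none` encodes the value `+∞`. -/
noncomputable def excTime (L : ℕ) (π : Fin (L + 1) → ℤ × ℤ) : ℕ → Option ℕ
  | 0 => some 0
  | (i + 1) => (excTime L π i).bind fun a =>
      nextTime L (if Even i then heightAt L π else widthAt L π) a

/-- The largest index `i` with `s_i` finite. -/
noncomputable def lastIdx (L : ℕ) (π : Fin (L + 1) → ℤ × ℤ) : ℕ :=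
  sSup {i : ℕ | (excTime L π i).isSome}

/-- The endpoint `s_i` of the `i`-th excursion, where an infinite value is replaced
by `L` (so that the final, possibly incomplete, segment runs up to time `L`). -/
noncomputable def excEnd (L : ℕ) (π : Fin (L + 1) → ℤ × ℤ) (i : ℕ) : ℕ :=
  (excTime L π i).getD L

/-- `T_i(π) = s_i − s_{i−1}`, the length of the `i`-th excursion. -/
noncomputable def excLen (L : ℕ) (π : Fin (L + 1) → ℤ × ℤ) (i : ℕ) : ℕ :=
  excEnd L π i - excEnd L π (i - 1)

/-- The final segment of `π` can be completed into a full excursion by adding a single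
extra step: some one-step prudent extension of `π` has a finite next excursion endpoint. -/
def finalSegmentCompletable (L : ℕ) (π : Fin (L + 1) → ℤ × ℤ) : Prop :=
  ∃ π' : Fin (L + 2) → ℤ × ℤ, (∀ i : Fin (L + 1), π' i.castSucc = π i) ∧
    π' ∈ prudentSet (L + 1) ∧ (excTime (L + 1) π' (lastIdx L π + 1)).isSome

open Classical in
/-- `γ_L(π)`: the number of complete excursions of `π`, counting the final segment when it
can be completed by a single extra step. -/
noncomputable def numExc (L : ℕ) (π : Fin (L + 1) → ℤ × ℤ) : ℕ :=
  lastIdx L π + if finalSegmentCompletable L π then 1 else 0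

/-- `E_i(π) = 1`: the `i`-th excursion crosses the range, i.e. a horizontal (odd `i`)
excursion traverses the full height of the range at its completion time, and a vertical
(even `i`) one the full width. -/
noncomputable def crossesRange (L : ℕ) (π : Fin (L + 1) → ℤ × ℤ) (i : ℕ) : Prop :=
  if i % 2 = 1 then
    ((π ⟨min (excEnd L π i) L, by omega⟩).2 -
        (π ⟨min (excEnd L π (i - 1)) L, by omega⟩).2).natAbs =
      heightAt L π (excEnd L π i) - 1
  else
    ((π ⟨min (excEnd L π i) L, by omega⟩).1 -
        (π ⟨min (excEnd L π (i - 1)) L, by omega⟩).1).natAbs =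
      widthAt L π (excEnd L π i) - 1

/-!
The ways in which a prudent path may be continued depend only on the box it spans, seen from its
endpoint, so prudent paths are counted by iterating a transfer operator on the possible shapes of
this box. Let `z` be the root of `1 - 2 * z - 2 * z ^ 2 + 2 * z ^ 3` in the unit interval. The
operator multiplied by `z` has a bounded subharmonic function, which is `1` at the start of the
path, and a bounded superharmonic one, which is small only far from the corners of the box; there
the growth rate is `1 + √2 < 1 / z`. Hence there are at least `z ^ (-L)` prudent paths of length
`L`, and from any shape a path has at most a constant times `z ^ (-n)` continuations of length `n`.

An excursion of index at least `2 * k + 2` starts when the range has more than `k` sites along each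
axis, so in order to cross the range it needs `k` consecutive steps which do not enlarge the range
along one axis. The growth rate of the number of such steps is `1 + √2` as well. A union bound over
the axis and the starting time of these `k` steps makes the probability of a crossing at most a
constant times `L * ((1 + √2) * z) ^ k`, which tends to zero when `k` is a large multiple of
`log L`.
-/

/-! ### Prudent steps in a moving frame -/

/-- The coordinate of `ℤ²` along an axis, with `true` the vertical and `false` the horizontal
axis. -/
def axisCoord : Bool → ℤ × ℤ →+ ℤ
  | true => AddMonoidHom.snd ℤ ℤ
  | false => AddMonoidHom.fst ℤ ℤ

/-- An orthonormal frame of `ℤ²` made of unit steps, used to describe a walk relative to its last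
step: the forward step is `sign` times the basis vector of `axis`, the lateral one is `latSign`
times the basis vector of the other axis. -/
structure StepFrame where
  axis : Bool
  sign : ℤˣ
  latSign : ℤˣ

namespace StepFrame

variable (F : StepFrame) {u v : ℤ × ℤ}

/-- The frame with forward and lateral directions exchanged. -/
def swap : StepFrame := ⟨!F.axis, F.latSign, F.sign⟩

/-- The frame with the opposite forward direction. -/
def reverse : StepFrame := ⟨F.axis, -F.sign, F.latSign⟩

/-- The forward step of a frame. -/
def step : ℤ × ℤ := if F.axis then (0, F.sign) else (F.sign, 0)

/-- The coordinate in the forward direction of a frame. -/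
def fwd : ℤ × ℤ →+ ℤ := (F.sign : ℤ) • axisCoord F.axis

/-- The coordinate in the lateral direction of a frame. -/
def lat : ℤ × ℤ →+ ℤ := F.swap.fwd

@[simp] lemma swap_swap : F.swap.swap = F := by simp [swap]

@[simp] lemma fwd_swap : F.swap.fwd = F.lat := rfl

@[simp] lemma lat_swap : F.swap.lat = F.fwd := by simp [lat]

@[simp] lemma lat_swap_reverse : F.swap.reverse.lat = F.fwd := F.lat_swap

@[simp] lemma fwd_reverse : F.reverse.fwd = -F.fwd := by simp [fwd, reverse]

@[simp] lemma fwd_step : F.fwd F.step = 1 := by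
  obtain ⟨_ | _, ε, _⟩ := F <;> simp [fwd, step, axisCoord, ← Units.val_mul]

@[simp] lemma lat_step : F.lat F.step = 0 := by
  obtain ⟨_ | _, ε, _⟩ := F <;> simp [lat, swap, fwd, step, axisCoord]

lemma fwd_add_zsmul_step (k : ℤ) : F.fwd (u + k • F.step) = F.fwd u + k := by
  rw [map_add, map_zsmul, fwd_step, smul_eq_mul, mul_one]

lemma lat_add_zsmul_step (k : ℤ) : F.lat (u + k • F.step) = F.lat u := by
  rw [map_add, map_zsmul, lat_step, smul_zero, add_zero]

lemma step_reverse : F.reverse.step = -F.step := by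
  obtain ⟨_ | _, ε, _⟩ := F <;> simp [reverse, step]

lemma fwd_eq_fwd_iff : F.fwd u = F.fwd v ↔ axisCoord F.axis u = axisCoord F.axis v := by
  simp [fwd]

lemma lat_eq_lat_iff : F.lat u = F.lat v ↔ axisCoord (!F.axis) u = axisCoord (!F.axis) v :=
  F.swap.fwd_eq_fwd_iff

variable {F} in
lemma ext_fwd_lat (hfwd : F.fwd u = F.fwd v) (hlat : F.lat u = F.lat v) : u = v := by
  rw [fwd_eq_fwd_iff] at hfwd
  rw [lat_eq_lat_iff] at hlat
  obtain ⟨_ | _, _, _⟩ := F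
  exacts [Prod.ext hfwd hlat, Prod.ext hlat hfwd]

lemma isStep_iff {d : ℤ × ℤ} : IsStep d ↔
    d = F.step ∨ d = F.reverse.step ∨ d = F.swap.step ∨ d = F.swap.reverse.step := by
  obtain ⟨_ | _, ε, δ⟩ := F <;> obtain rfl | rfl := Int.units_eq_one_or ε <;>
    obtain rfl | rfl := Int.units_eq_one_or δ <;>
    simp [IsStep, step, reverse, swap] <;> tauto

lemma isStep_step : IsStep F.step := F.isStep_iff.2 (.inl rfl)

lemma nodup_steps : [F.step, F.reverse.step, F.swap.step, F.swap.reverse.step].Nodup := by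
  obtain ⟨_ | _, ε, δ⟩ := F <;> obtain rfl | rfl := Int.units_eq_one_or ε <;>
    obtain rfl | rfl := Int.units_eq_one_or δ <;> simp [step, reverse, swap]

end StepFrame

/-- The step `d` may be appended at time `s` to the walk `p` without looking at a site visited
before; only the values of `p` up to time `s` matter. -/
def PrudentStep (p : ℕ → ℤ × ℤ) (s : ℕ) (d : ℤ × ℤ) : Prop :=
  IsStep d ∧ ∀ k : ℕ, 1 ≤ k → ∀ j ≤ s, p s + (k : ℤ) • d ≠ p j

lemma prudentStep_step_iff {p : ℕ → ℤ × ℤ} {s : ℕ} {F : StepFrame} : PrudentStep p s F.step ↔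
    ∀ i ≤ s, F.lat (p i) = F.lat (p s) → F.fwd (p i) ≤ F.fwd (p s) := by
  refine ⟨fun ⟨_, h⟩ i hi hlat => ?_, fun h => ⟨F.isStep_step, fun k hk j hj heq => ?_⟩⟩
  · by_contra! hlt
    refine h (F.fwd (p i) - F.fwd (p s)).toNat (by omega) i hi (F.ext_fwd_lat ?_ ?_)
    · rw [F.fwd_add_zsmul_step]
      omega
    · rw [F.lat_add_zsmul_step, hlat]
  · have := h j hj (by rw [← heq, F.lat_add_zsmul_step])
    rw [← heq, F.fwd_add_zsmul_step] at this
    omega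

/-- The step of the walk `q` from time `t` to time `t + 1` enlarges the range of the coordinate
along the axis `m`. -/
def Expands (m : Bool) (q : ℕ → ℤ × ℤ) (t : ℕ) : Prop :=
  ∀ i ≤ t, axisCoord m (q i) ≠ axisCoord m (q (t + 1))

/-- The values of `f` up to time `s` fill the interval reaching `lo` below and `hi` above the
current value `f s`. -/
def RangeEq (f : ℕ → ℤ) (s lo hi : ℕ) : Prop := f '' Iic s = Icc (f s - lo) (f s + hi)

namespace RangeEq

variable {f g : ℕ → ℤ} {s lo hi i : ℕ} {x : ℤ}

lemma congr (h : RangeEq f s lo hi) (hg : ∀ i ≤ s, g i = f i) : RangeEq g s lo hi := by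
  rw [RangeEq, hg s le_rfl, ← h]
  exact image_congr hg

lemma le_add (h : RangeEq f s lo hi) (hi' : i ≤ s) : f i ≤ f s + hi :=
  (h.subset (mem_image_of_mem f hi')).2

lemma exists_eq (h : RangeEq f s lo hi) (hlo : f s - lo ≤ x) (hhi : x ≤ f s + hi) :
    ∃ i ≤ s, f i = x :=
  h.superset ⟨hlo, hhi⟩

lemma neg (h : RangeEq f s lo hi) : RangeEq (-f) s hi lo := by
  have : (-f) '' Iic s = Neg.neg '' (f '' Iic s) := by rw [image_image]; rfl
  rw [RangeEq, this, h, image_neg_eq_neg, neg_Icc, Pi.neg_apply, neg_add', neg_sub',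
    sub_neg_eq_add]

lemma zero (f : ℕ → ℤ) : RangeEq f 0 0 0 := by
  simp [RangeEq, show Iic 0 = {0} from Iic_bot]

lemma image_succ (f : ℕ → ℤ) (s : ℕ) :
    f '' Iic (s + 1) = insert (f (s + 1)) (f '' Iic s) := by
  rw [← image_insert_eq]
  exact congrArg _ (Order.Iic_succ s)

lemma succ_of_eq (h : RangeEq f s lo hi) (hf : f (s + 1) = f s) : RangeEq f (s + 1) lo hi := by
  rw [RangeEq, image_succ, hf, insert_eq_of_mem (mem_image_of_mem f self_mem_Iic), h]

lemma succ_of_eq_add_one (h : RangeEq f s lo hi) (hf : f (s + 1) = f s + 1) :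
    RangeEq f (s + 1) (lo + 1) (hi - 1) := by
  rw [RangeEq, image_succ, h, hf]
  ext x
  simp only [mem_insert_iff, mem_Icc]
  omega

end RangeEq

/-- The shape of the box spanned by a prudent path as seen from its endpoint, which decides how the
path may be continued. -/
inductive PrudentState
  /-- The path has no step yet. -/
  | start
  /-- The last step, in the forward direction of `F`, enlarged the box: it extends `depth` sites
  behind the endpoint, and `left` and `right` sites in and against the lateral direction. -/
  | outward (F : StepFrame) (depth left right : ℕ)
  /-- The last step, in the forward direction of `F`, followed the side of the box which faces the
  lateral direction: the box extends `ahead` sites in front of the endpoint, `behind` sites behind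
  it and `depth` sites against the lateral direction. -/
  | along (F : StepFrame) (ahead behind depth : ℕ)

namespace PrudentState

variable {m : Bool} {p q : ℕ → ℤ × ℤ} {s : ℕ} {F : StepFrame} {k a b f : ℕ} {σ c : PrudentState}
  {d : ℤ × ℤ}

/-- The state after a forward step along the side of the box which faces the lateral direction,
when the box extends `a`, `b` and `k` sites ahead, behind and in depth before the step. -/
def advance (F : StepFrame) (a b k : ℕ) : PrudentState :=
  match a with
  | 0 => outward F (b + 1) 0 k
  | a + 1 => along F a (b + 1) k

/-- The states which can follow a given state, one for each prudent step. -/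
def children : PrudentState → List PrudentState
  | start =>
    let F : StepFrame := ⟨false, 1, 1⟩
    [outward F 1 0 0, outward F.reverse 1 0 0, outward F.swap 1 0 0, outward F.swap.reverse 1 0 0]
  | outward F k a b => [outward F (k + 1) a b, advance F.swap a b k, advance F.swap.reverse b a k]
  | along F f b k => [advance F f b k, outward F.swap (k + 1) f b]

/-- The last step of the path, with the junk value `0` at the starting point. -/
def step : PrudentState → ℤ × ℤ
  | start => 0
  | outward F _ _ _ => F.step
  | along F _ _ _ => F.step

/-- Whether the last step of the path enlarged the box along the axis `m`. -/
def expands (m : Bool) : PrudentState → Bool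
  | outward F _ _ _ => F.axis == m
  | _ => false

@[simp] lemma step_outward : (outward F k a b).step = F.step := rfl

@[simp] lemma step_advance : (advance F a b k).step = F.step := by cases a <;> rfl

lemma nodup_map_step_children (σ : PrudentState) : (σ.children.map step).Nodup := by
  rcases σ with _ | ⟨F, k, a, b⟩ | ⟨F, f, b, k⟩
  · exact StepFrame.nodup_steps ⟨false, 1, 1⟩
  · have := F.nodup_steps
    simp_all [children]
  · have := F.nodup_steps
    simp_all [children]

/-- The meaning of `PrudentState.outward` for the path `p` at time `s`. -/
structure OutwardAt (p : ℕ → ℤ × ℤ) (s : ℕ) (F : StepFrame) (depth left right : ℕ) : Prop where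
  range_fwd : RangeEq (fun i => F.fwd (p i)) s depth 0
  range_lat : RangeEq (fun i => F.lat (p i)) s right left
  front : ∀ i < s, F.fwd (p i) < F.fwd (p s)
  back : ∃ i < s, p i = p s - F.step

/-- The meaning of `PrudentState.along` for the path `p` at time `s`. -/
structure AlongAt (p : ℕ → ℤ × ℤ) (s : ℕ) (F : StepFrame) (ahead behind depth : ℕ) : Prop where
  range_fwd : RangeEq (fun i => F.fwd (p i)) s behind ahead
  range_lat : RangeEq (fun i => F.lat (p i)) s depth 0
  front : ∀ i ≤ s, F.lat (p i) = F.lat (p s) → F.fwd (p i) ≤ F.fwd (p s)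
  inward : ∃ i < s, F.fwd (p i) = F.fwd (p s) ∧ F.lat (p i) < F.lat (p s)
  back : ∃ i < s, p i = p s - F.step

/-- The state `σ` describes the path `p` stopped at time `s`. -/
def Describes (p : ℕ → ℤ × ℤ) (s : ℕ) : PrudentState → Prop
  | start => s = 0
  | outward F k a b => OutwardAt p s F k a b
  | along F f b k => AlongAt p s F f b k

lemma OutwardAt.congr (h : OutwardAt p s F k a b) (hq : ∀ i ≤ s, q i = p i) :
    OutwardAt q s F k a b where
  range_fwd := h.range_fwd.congr fun i hi => by rw [hq i hi]
  range_lat := h.range_lat.congr fun i hi => by rw [hq i hi]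
  front i hi := by rw [hq i hi.le, hq s le_rfl]; exact h.front i hi
  back := h.back.imp fun i ⟨hi, hb⟩ => ⟨hi, by rw [hq i hi.le, hq s le_rfl, hb]⟩

lemma AlongAt.congr (h : AlongAt p s F f b k) (hq : ∀ i ≤ s, q i = p i) :
    AlongAt q s F f b k where
  range_fwd := h.range_fwd.congr fun i hi => by rw [hq i hi]
  range_lat := h.range_lat.congr fun i hi => by rw [hq i hi]
  front i hi := by rw [hq i hi, hq s le_rfl]; exact h.front i hi
  inward := h.inward.imp fun i ⟨hi, hb⟩ => ⟨hi, by rwa [hq i hi.le, hq s le_rfl]⟩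
  back := h.back.imp fun i ⟨hi, hb⟩ => ⟨hi, by rw [hq i hi.le, hq s le_rfl, hb]⟩

lemma Describes.congr (h : Describes p s σ) (hq : ∀ i ≤ s, q i = p i) : Describes q s σ :=
  match σ, h with
  | start, h => h
  | outward _ _ _ _, h => OutwardAt.congr h hq
  | along _ _ _ _, h => AlongAt.congr h hq

section step

variable (hstep : p (s + 1) = p s + F.step)
include hstep

lemma fwd_succ : F.fwd (p (s + 1)) = F.fwd (p s) + 1 := by
  rw [hstep, map_add, F.fwd_step]

lemma lat_succ : F.lat (p (s + 1)) = F.lat (p s) := by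
  rw [hstep, map_add, F.lat_step, add_zero]

lemma back_succ : ∃ i < s + 1, p i = p (s + 1) - F.step :=
  ⟨s, s.lt_succ_self, by rw [hstep, add_sub_cancel_right]⟩

lemma OutwardAt.of_step (hfwd : RangeEq (fun i => F.fwd (p i)) s k 0)
    (hlat : RangeEq (fun i => F.lat (p i)) s b a) : OutwardAt p (s + 1) F (k + 1) a b where
  range_fwd := hfwd.succ_of_eq_add_one (fwd_succ hstep)
  range_lat := hlat.succ_of_eq (lat_succ hstep)
  front i hi := by
    have : F.fwd (p i) ≤ F.fwd (p s) + (0 : ℕ) := hfwd.le_add (Nat.lt_succ_iff.1 hi)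
    rw [fwd_succ hstep]
    omega
  back := back_succ hstep

lemma AlongAt.of_step (hfwd : RangeEq (fun i => F.fwd (p i)) s b (f + 1))
    (hlat : RangeEq (fun i => F.lat (p i)) s k 0)
    (hfront : ∀ i ≤ s, F.lat (p i) = F.lat (p s) → F.fwd (p i) ≤ F.fwd (p s)) :
    AlongAt p (s + 1) F f (b + 1) k where
  range_fwd := hfwd.succ_of_eq_add_one (fwd_succ hstep)
  range_lat := hlat.succ_of_eq (lat_succ hstep)
  front i hi h := by
    obtain hi | rfl := Nat.le_succ_iff.1 hi
    · rw [fwd_succ hstep]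
      exact (hfront i hi (h.trans (lat_succ hstep))).trans (Int.le_add_one le_rfl)
    · exact le_rfl
  inward := by
    obtain ⟨i, hi, hfi⟩ : ∃ i ≤ s, F.fwd (p i) = F.fwd (p s) + 1 :=
      hfwd.exists_eq (x := F.fwd (p s) + 1) (by omega) (by push_cast; omega)
    have hle : F.lat (p i) ≤ F.lat (p s) + (0 : ℕ) := hlat.le_add hi
    have hne : F.lat (p i) ≠ F.lat (p s) := fun h => by have := hfront i hi h; omega
    exact ⟨i, Nat.lt_succ_iff.2 hi, by rw [hfi, fwd_succ hstep], by rw [lat_succ hstep]; omega⟩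
  back := back_succ hstep

lemma describes_advance (hfwd : RangeEq (fun i => F.fwd (p i)) s b a)
    (hlat : RangeEq (fun i => F.lat (p i)) s k 0)
    (hfront : ∀ i ≤ s, F.lat (p i) = F.lat (p s) → F.fwd (p i) ≤ F.fwd (p s)) :
    Describes p (s + 1) (advance F a b k) := by
  cases a with
  | zero => exact OutwardAt.of_step hstep hfwd hlat
  | succ a => exact AlongAt.of_step hstep hfwd hlat hfront

end step

lemma OutwardAt.eq_of_fwd_eq (h : OutwardAt p s F k a b) {i : ℕ} (hi : i ≤ s)
    (hfwd : F.fwd (p i) = F.fwd (p s)) : i = s :=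
  hi.eq_of_not_lt fun hlt => (h.front i hlt).ne hfwd

lemma Describes.child (h : Describes p s σ) (hc : c ∈ σ.children)
    (hstep : p (s + 1) = p s + c.step) : Describes p (s + 1) c := by
  rcases σ with _ | ⟨F, k, a, b⟩ | ⟨F, f, b, k⟩
  · obtain rfl : s = 0 := h
    simp only [children, List.mem_cons, List.not_mem_nil, or_false] at hc
    rcases hc with rfl | rfl | rfl | rfl <;> exact OutwardAt.of_step hstep (.zero _) (.zero _)
  · have h : OutwardAt p s F k a b := h
    simp only [children, List.mem_cons, List.not_mem_nil, or_false] at hc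
    rcases hc with rfl | rfl | rfl
    · exact OutwardAt.of_step hstep h.range_fwd h.range_lat
    · rw [step_advance] at hstep
      refine describes_advance hstep h.range_lat (by simpa using h.range_fwd) fun i hi hlat => ?_
      rw [F.lat_swap] at hlat
      rw [h.eq_of_fwd_eq hi hlat]
    · rw [step_advance] at hstep
      refine describes_advance hstep ?_ (by simpa using h.range_fwd) fun i hi hlat => ?_
      · rw [F.swap.fwd_reverse]
        exact h.range_lat.neg
      · rw [F.lat_swap_reverse] at hlat
        rw [h.eq_of_fwd_eq hi hlat]
  · have h : AlongAt p s F f b k := h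
    simp only [children, List.mem_cons, List.not_mem_nil, or_false] at hc
    rcases hc with rfl | rfl
    · rw [step_advance] at hstep
      exact describes_advance hstep h.range_fwd h.range_lat h.front
    · exact OutwardAt.of_step hstep h.range_lat (by simpa using h.range_fwd)

lemma not_prudentStep_reverse (hback : ∃ i < s, p i = p s - F.step) :
    ¬PrudentStep p s F.reverse.step := by
  obtain ⟨i, hi, hpi⟩ := hback
  refine fun h => h.2 1 le_rfl i hi.le ?_
  rw [hpi, F.step_reverse, Nat.cast_one, one_smul, sub_eq_add_neg]

lemma OutwardAt.prudentStep_iff (h : OutwardAt p s F k a b) : PrudentStep p s d ↔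
    d = F.step ∨ d = F.swap.step ∨ d = F.swap.reverse.step := by
  have hback := not_prudentStep_reverse h.back
  refine ⟨fun hd => ?_, ?_⟩
  · rcases F.isStep_iff.1 hd.1 with rfl | rfl | rfl | rfl
    exacts [.inl rfl, (hback hd).elim, .inr (.inl rfl), .inr (.inr rfl)]
  · rintro (rfl | rfl | rfl) <;> refine prudentStep_step_iff.2 fun i hi hlat => ?_
    · simpa using h.range_fwd.le_add hi
    · rw [F.lat_swap] at hlat
      rw [h.eq_of_fwd_eq hi hlat]
    · rw [F.lat_swap_reverse] at hlat
      rw [h.eq_of_fwd_eq hi hlat]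

lemma AlongAt.prudentStep_iff (h : AlongAt p s F f b k) : PrudentStep p s d ↔
    d = F.step ∨ d = F.swap.step := by
  have hback := not_prudentStep_reverse h.back
  have hinward : ¬PrudentStep p s F.swap.reverse.step := by
    obtain ⟨i, hi, hfwd, hlat⟩ := h.inward
    rw [prudentStep_step_iff]
    push Not
    exact ⟨i, hi.le, by simpa using hfwd, by simpa using hlat⟩
  refine ⟨fun hd => ?_, ?_⟩
  · rcases F.isStep_iff.1 hd.1 with rfl | rfl | rfl | rfl
    exacts [.inl rfl, (hback hd).elim, .inr rfl, (hinward hd).elim]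
  · rintro (rfl | rfl) <;> rw [prudentStep_step_iff]
    · exact h.front
    · exact fun i hi _ => by simpa using h.range_lat.le_add hi

lemma Describes.prudentStep_iff (h : Describes p s σ) :
    PrudentStep p s d ↔ d ∈ σ.children.map step := by
  rcases σ with _ | ⟨F, k, a, b⟩ | ⟨F, f, b, k⟩
  · obtain rfl : s = 0 := h
    have (F : StepFrame) : PrudentStep p 0 F.step :=
      prudentStep_step_iff.2 fun i hi _ => by rw [Nat.le_zero.1 hi]
    simp only [children, step_outward, List.map_cons, List.map_nil, List.mem_cons, List.not_mem_nil,
      or_false]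
    rw [← StepFrame.isStep_iff]
    refine ⟨fun hd => hd.1, fun hd => ?_⟩
    rcases (StepFrame.isStep_iff ⟨false, 1, 1⟩).1 hd with rfl | rfl | rfl | rfl <;> exact this _
  · rw [OutwardAt.prudentStep_iff h]
    simp [children]
  · rw [AlongAt.prudentStep_iff h]
    simp [children]

lemma not_expands_lat (hback : ∃ i < s + 1, p i = p (s + 1) - F.step) :
    ¬Expands (!F.axis) p s := by
  obtain ⟨i, hi, hpi⟩ := hback
  refine fun h => h i (Nat.lt_succ_iff.1 hi) ?_
  rw [← F.lat_eq_lat_iff, hpi, map_sub, F.lat_step, sub_zero]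

lemma Describes.expands_iff (h : Describes p (s + 1) σ) : σ.expands m ↔ Expands m p s := by
  rcases σ with _ | ⟨F, k, a, b⟩ | ⟨F, f, b, k⟩
  · exact absurd h s.succ_ne_zero
  · have h : OutwardAt p (s + 1) F k a b := h
    by_cases hm : F.axis = m
    · refine iff_of_true (by simpa [expands] using hm) fun i hi => ?_
      rw [← hm, ne_eq, ← F.fwd_eq_fwd_iff]
      exact (h.front i (Nat.lt_succ_iff.2 hi)).ne
    · refine iff_of_false (by simpa [expands] using hm) fun hexp => ?_
      exact not_expands_lat h.back (by rwa [← Bool.eq_not.2 (Ne.symm hm)])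
  · have h : AlongAt p (s + 1) F f b k := h
    refine iff_of_false (by simp [expands]) fun hexp => ?_
    by_cases hm : F.axis = m
    · obtain ⟨i, hi, hfwd, -⟩ := h.inward
      exact hexp i (Nat.lt_succ_iff.1 hi) (by rwa [← hm, ← F.fwd_eq_fwd_iff])
    · exact not_expands_lat h.back (by rwa [← Bool.eq_not.2 (Ne.symm hm)])

end PrudentState

/-! ### Counting continuations -/

lemma encard_biUnion_list {ι α : Type*} {S : ι → Set α} {l : List ι}
    (h : l.Pairwise fun i j => Disjoint (S i) (S j)) :
    (⋃ i ∈ l, S i).encard = (l.map fun i => (S i).encard).sum := by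
  induction l with
  | nil => simp
  | cons i l ih =>
    obtain ⟨hi, hl⟩ := List.pairwise_cons.1 h
    simp only [List.mem_cons, iUnion_iUnion_eq_or_left, List.map_cons, List.sum_cons]
    rw [encard_union_eq (disjoint_iUnion₂_right.2 hi), ih hl]

/-- From time `s` on, `q` makes `w.length` prudent steps and then stays put, where the `t`-th of
these steps must not enlarge the range along the axis `m` if the `t`-th letter of `w` is `true`. -/
structure IsContinuation (m : Bool) (w : List Bool) (s : ℕ) (q : ℕ → ℤ × ℤ) : Prop where
  prudentStep : ∀ t < w.length, PrudentStep q (s + t) (q (s + t + 1) - q (s + t))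
  not_expands : ∀ t, w[t]? = some true → ¬Expands m q (s + t)
  eventually_const : ∀ i ≥ s + w.length, q i = q (s + w.length)

lemma isContinuation_cons {m b : Bool} {w : List Bool} {s : ℕ} {q : ℕ → ℤ × ℤ} :
    IsContinuation m (b :: w) s q ↔ PrudentStep q s (q (s + 1) - q s) ∧
      (b = true → ¬Expands m q s) ∧ IsContinuation m w (s + 1) q := by
  have hlen : s + (b :: w).length = s + 1 + w.length := by rw [List.length_cons]; omega
  refine ⟨fun ⟨h₁, h₂, h₃⟩ => ⟨h₁ 0 (by simp), fun hb => h₂ 0 (by simp [hb]), ?_, ?_, ?_⟩,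
    fun ⟨h₁, h₂, h₃, h₄, h₅⟩ => ⟨?_, ?_, by rwa [hlen]⟩⟩
  · intro t ht
    rw [Nat.add_right_comm, add_assoc s t 1]
    exact h₁ (t + 1) (by simpa using ht)
  · intro t ht
    rw [Nat.add_right_comm]
    exact h₂ (t + 1) (by simpa using ht)
  · rwa [← hlen]
  · rintro (_ | t) ht
    · exact h₁
    · rw [← add_assoc s t 1, Nat.add_right_comm s t 1]
      exact h₃ t (by simpa using ht)
  · rintro (_ | t) ht
    · exact h₂ (by simpa using ht)
    · rw [← add_assoc s t 1, Nat.add_right_comm s t 1]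
      exact h₄ t (by simpa using ht)

namespace PrudentState

/-- The number of ways to continue a path in a given state by `w.length` prudent steps, where a
letter `true` of `w` forbids the corresponding step to enlarge the box along the axis `m`. -/
def count (m : Bool) : List Bool → PrudentState → ℕ
  | [], _ => 1
  | b :: w, σ => (σ.children.map fun c => if b && c.expands m then 0 else count m w c).sum

variable {m b : Bool} {w : List Bool} {p q : ℕ → ℤ × ℤ} {s : ℕ} {σ c : PrudentState}

/-- The continuations of `p` after time `s` whose step at time `s` leads to the state `c`. -/
def continuationsVia (m b : Bool) (w : List Bool) (p : ℕ → ℤ × ℤ) (s : ℕ) (c : PrudentState) :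
    Set (ℕ → ℤ × ℤ) :=
  {q | IsContinuation m (b :: w) s q ∧ (∀ i ≤ s, q i = p i) ∧ q (s + 1) = p s + c.step}

lemma continuations_eq_biUnion (h : Describes p s σ) :
    {q | IsContinuation m (b :: w) s q ∧ ∀ i ≤ s, q i = p i} =
      ⋃ c ∈ σ.children, continuationsVia m b w p s c := by
  ext q
  simp only [continuationsVia, mem_ofPred_eq, mem_iUnion, exists_prop]
  refine ⟨fun ⟨hq, hp⟩ => ?_, fun ⟨_, _, hq, hp, _⟩ => ⟨hq, hp⟩⟩
  have hstep := (isContinuation_cons.1 hq).1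
  rw [(h.congr hp).prudentStep_iff, List.mem_map] at hstep
  obtain ⟨c, hc, hstep⟩ := hstep
  exact ⟨c, hc, hq, hp, by rw [hstep, hp s le_rfl, add_sub_cancel]⟩

lemma pairwise_disjoint_continuationsVia (σ : PrudentState) : σ.children.Pairwise fun c c' =>
    Disjoint (continuationsVia m b w p s c) (continuationsVia m b w p s c') := by
  refine (List.pairwise_map.1 σ.nodup_map_step_children).imp fun hne => ?_
  exact disjoint_left.2 fun q hq hq' => hne (add_left_cancel (hq.2.2.symm.trans hq'.2.2))

lemma isContinuation_cons_iff_of_child (h : Describes p s σ) (hc : c ∈ σ.children)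
    (hp : ∀ i ≤ s, q i = p i) (hstep : q (s + 1) = p s + c.step) :
    IsContinuation m (b :: w) s q ↔ ¬(b && c.expands m) ∧ IsContinuation m w (s + 1) q := by
  have hσ := h.congr hp
  rw [← hp s le_rfl] at hstep
  have hexpands := (hσ.child hc hstep).expands_iff (m := m)
  have hprudent : PrudentStep q s (q (s + 1) - q s) := by
    rw [hσ.prudentStep_iff, hstep, add_sub_cancel_left]
    exact List.mem_map_of_mem hc
  rw [isContinuation_cons, ← hexpands, and_iff_right hprudent, Bool.and_eq_true, not_and]

lemma continuationsVia_eq (h : Describes p s σ) (hc : c ∈ σ.children) :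
    continuationsVia m b w p s c = if b && c.expands m then ∅ else
      {q | IsContinuation m w (s + 1) q ∧
        ∀ i ≤ s + 1, q i = Function.update p (s + 1) (p s + c.step) i} := by
  have hupdate (q : ℕ → ℤ × ℤ) : (∀ i ≤ s + 1, q i = Function.update p (s + 1) (p s + c.step) i) ↔
      (∀ i ≤ s, q i = p i) ∧ q (s + 1) = p s + c.step := by
    simp only [Nat.le_succ_iff_eq_or_le, forall_eq_or_imp, Function.update_self]
    rw [and_comm]
    refine and_congr_left' (forall₂_congr fun i hi => ?_)
    rw [Function.update_of_ne (by omega)]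
  simp only [hupdate]
  ext q
  split_ifs with hb <;> simp only [continuationsVia, mem_ofPred_eq, mem_empty_iff_false, iff_false]
  · exact fun ⟨hq, hp, hstep⟩ => ((isContinuation_cons_iff_of_child h hc hp hstep).1 hq).1 hb
  · refine and_congr_left fun ⟨hp, hstep⟩ => ?_
    rw [isContinuation_cons_iff_of_child h hc hp hstep, and_iff_right hb]

theorem encard_continuations (h : Describes p s σ) (m : Bool) (w : List Bool) :
    {q | IsContinuation m w s q ∧ ∀ i ≤ s, q i = p i}.encard = count m w σ := by
  induction w generalizing p s σ with
  | nil =>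
    rw [count, Nat.cast_one, encard_eq_one]
    refine ⟨fun i => p (min i s), ext fun q => ⟨fun ⟨hq, hp⟩ => funext fun i => ?_, ?_⟩⟩
    · rcases le_total i s with hi | hi
      · rw [hp i hi, min_eq_left hi]
      · rw [min_eq_right hi, ← hp s le_rfl, hq.eventually_const i hi, List.length_nil, add_zero]
    · rintro rfl
      refine ⟨⟨by simp, by simp, fun i hi => ?_⟩, fun i hi => ?_⟩
      · simp_all
      · simp [hi]
  | cons b w ih =>
    rw [continuations_eq_biUnion h, encard_biUnion_list (pairwise_disjoint_continuationsVia σ),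
      count, Nat.cast_list_sum, List.map_map]
    refine congrArg List.sum (List.map_congr_left fun c hc => ?_)
    have hchild : Describes (Function.update p (s + 1) (p s + c.step)) (s + 1) c := by
      refine (h.congr fun i hi => ?_).child hc ?_
      · exact Function.update_of_ne (by omega) ..
      · rw [Function.update_self, Function.update_of_ne (by omega)]
    rw [continuationsVia_eq h hc, Function.comp_apply]
    split_ifs
    · rw [encard_empty, Nat.cast_zero]
    · exact ih hchild

end PrudentState

/-- The finite path `π` as a walk indexed by `ℕ`, which stays put after time `L`. -/
def pathAt (L : ℕ) (π : Fin (L + 1) → ℤ × ℤ) (t : ℕ) : ℤ × ℤ := π ⟨min t L, by omega⟩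

section pathAt

variable {L : ℕ}

lemma pathAt_val (π : Fin (L + 1) → ℤ × ℤ) (i : Fin (L + 1)) : pathAt L π i = π i :=
  congrArg π (Fin.ext (min_eq_left (Nat.lt_succ_iff.1 i.2)))

lemma pathAt_injective (L : ℕ) : Function.Injective (pathAt L) := fun π π' h =>
  funext fun i => by rw [← pathAt_val π, h, pathAt_val]

lemma mem_prudentSet_iff {π : Fin (L + 1) → ℤ × ℤ} : π ∈ prudentSet L ↔ pathAt L π 0 = 0 ∧
    ∀ t < L, PrudentStep (pathAt L π) t (pathAt L π (t + 1) - pathAt L π t) := by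
  have hsucc (i : Fin L) : π i.succ = pathAt L π (i + 1) := (pathAt_val π i.succ).symm
  have hcast (i : Fin L) : π i.castSucc = pathAt L π i := (pathAt_val π i.castSucc).symm
  simp only [prudentSet, mem_ofPred_eq, hsucc, hcast, Fin.forall_iff (n := L)]
  refine and_congr (by rw [← pathAt_val π 0, Fin.val_zero, Prod.zero_eq_mk]) ?_
  refine forall₂_congr fun t ht => and_congr_right' (forall₂_congr fun k _ => ?_)
  refine ⟨fun h j hj => ?_, fun h j hj => ?_⟩
  · rw [← Nat.lt_succ_iff] at hj
    have := h ⟨j, by omega⟩ (Nat.lt_succ_iff.1 hj)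
    rwa [← pathAt_val π] at this
  · rw [← pathAt_val π j]
    exact h j hj

lemma isContinuation_pathAt_iff {m : Bool} {w : List Bool} {π : Fin (w.length + 1) → ℤ × ℤ} :
    π ∈ prudentSet w.length ∧ (∀ t, w[t]? = some true → ¬Expands m (pathAt w.length π) t) ↔
      IsContinuation m w 0 (pathAt w.length π) ∧ pathAt w.length π 0 = 0 := by
  have hconst : ∀ i ≥ 0 + w.length, pathAt w.length π i = pathAt w.length π (0 + w.length) :=
    fun i hi => congrArg π (Fin.ext (by simp only [zero_add] at *; omega))
  rw [mem_prudentSet_iff]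
  constructor
  · exact fun ⟨⟨h0, hstep⟩, hexp⟩ => ⟨⟨by simpa using hstep, by simpa using hexp, hconst⟩, h0⟩
  · exact fun ⟨⟨hstep, hexp, _⟩, h0⟩ => ⟨⟨h0, by simpa using hstep⟩, by simpa using hexp⟩

/-- The prudent paths of length `L` whose `t`-th step does not enlarge the range along the axis `m`
whenever the `t`-th letter of `w` is `true`. -/
def restrictedPrudentSet (L : ℕ) (m : Bool) (w : List Bool) : Set (Fin (L + 1) → ℤ × ℤ) :=
  {π | π ∈ prudentSet L ∧ ∀ t, w[t]? = some true → ¬Expands m (pathAt L π) t}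

theorem ncard_restrictedPrudentSet {m : Bool} {w : List Bool} (hw : w.length = L) :
    (restrictedPrudentSet L m w).ncard = PrudentState.start.count m w := by
  subst hw
  have himage : pathAt w.length '' restrictedPrudentSet w.length m w =
      {q | IsContinuation m w 0 q ∧ ∀ i ≤ 0, q i = (0 : ℕ → ℤ × ℤ) i} := by
    simp only [restrictedPrudentSet, isContinuation_pathAt_iff, nonpos_iff_eq_zero,
      forall_eq, Pi.zero_apply]
    ext q
    refine ⟨fun ⟨_, hπ, hq⟩ => hq ▸ hπ, fun hq => ?_⟩
    have hpath : pathAt w.length (fun i => q i) = q := funext fun i => by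
      rcases le_total i w.length with hi | hi
      · simp [pathAt, hi]
      · simpa [pathAt, hi] using (hq.1.eventually_const i (by simpa using hi)).symm
    exact ⟨fun i => q i, by rwa [mem_ofPred_eq, hpath], hpath⟩
  have hstart : PrudentState.Describes 0 0 .start := rfl
  rw [← ncard_image_of_injective _ (pathAt_injective _), himage, ncard,
    PrudentState.encard_continuations hstart, ENat.toNat_natCast]

end pathAt

/-! ### The transfer operator -/

namespace PrudentState

variable {m b : Bool} {w w' : List Bool} {σ : PrudentState} {F : StepFrame} {k l r f i : ℕ}
  {φ ψ : PrudentState → ℝ} {x z : ℝ}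

/-- The transfer operator of prudent paths: the sum of `φ` over the next states, without those
obtained by enlarging the box along the axis `m` if `b` is `true`. -/
def transfer (m b : Bool) (φ : PrudentState → ℝ) (σ : PrudentState) : ℝ :=
  (σ.children.map fun c => if b && c.expands m then 0 else φ c).sum

lemma transfer_mono (h : ∀ c, φ c ≤ ψ c) : transfer m b φ σ ≤ transfer m b ψ σ :=
  List.sum_le_sum fun c _ => by split_ifs <;> simp [h c]

lemma transfer_const_mul : transfer m b (fun c => x * φ c) σ = x * transfer m b φ σ := by
  simp only [transfer, ← List.sum_map_mul_left, mul_ite, mul_zero]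

lemma transfer_add :
    transfer m b (fun c => φ c + ψ c) σ = transfer m b φ σ + transfer m b ψ σ := by
  rw [transfer, transfer, transfer, ← List.sum_map_add]
  refine congrArg List.sum (List.map_congr_left fun c _ => ?_)
  split_ifs <;> simp

lemma transfer_false_start : transfer m false φ start =
    φ (outward ⟨false, 1, 1⟩ 1 0 0) + φ (outward ⟨false, -1, 1⟩ 1 0 0) +
      φ (outward ⟨true, 1, 1⟩ 1 0 0) + φ (outward ⟨true, -1, 1⟩ 1 0 0) := by
  simp only [transfer, children, StepFrame.swap, StepFrame.reverse, Bool.not_false, Bool.false_and,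
    Bool.false_eq_true, if_false, List.map_cons, List.map_nil, List.sum_cons, List.sum_nil]
  ring

lemma transfer_false_outward : transfer m false φ (outward F k l r) =
    φ (outward F (k + 1) l r) + φ (advance F.swap l r k) + φ (advance F.swap.reverse r l k) := by
  simp [transfer, children, add_assoc]

lemma transfer_false_along : transfer m false φ (along F f i k) =
    φ (advance F f i k) + φ (outward F.swap (k + 1) f i) := by
  simp [transfer, children]

lemma count_cons : (count m (b :: w) σ : ℝ) = transfer m b (fun c => count m w c) σ := by
  rw [count, transfer, Nat.cast_list_sum, List.map_map]
  refine congrArg List.sum (List.map_congr_left fun c _ => ?_)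
  simp

lemma count_append_le (h : ∀ c, count m w' c ≤ x) (σ : PrudentState) :
    count m (w ++ w') σ ≤ x * count m w σ := by
  induction w generalizing σ with
  | nil => simpa [count] using h σ
  | cons b w ih =>
    rw [List.cons_append, count_cons, count_cons, ← transfer_const_mul]
    exact transfer_mono ih

end PrudentState

/-- The parameter `z` is the radius of convergence of the generating function of prudent paths: it
is the root of the cubic in the unit interval, and the bounds separate `1 / z` from the growth rate
`1 + √2` of paths confined to a strip. -/
structure IsCritical (z : ℝ) : Prop where
  two_fifths_lt : 2 / 5 < z
  lt_sqrt_two_sub_one : z < √2 - 1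
  cubic : 1 - 2 * z - 2 * z ^ 2 + 2 * z ^ 3 = 0

lemma sqrt_two_bounds : 141 / 100 < √2 ∧ √2 < 142 / 100 :=
  ⟨Real.lt_sqrt_of_sq_lt (by norm_num), (Real.sqrt_lt' (by norm_num)).2 (by norm_num)⟩

theorem exists_isCritical : ∃ z, IsCritical z := by
  have hcont : ContinuousOn (fun z : ℝ => 1 - 2 * z - 2 * z ^ 2 + 2 * z ^ 3)
      (Icc (2 / 5) (41 / 100)) := by fun_prop
  obtain ⟨z, ⟨hl, hu⟩, hz⟩ := intermediate_value_Ioo' (by norm_num) hcont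
    (show (0 : ℝ) ∈ Ioo _ _ by constructor <;> norm_num)
  exact ⟨z, hl, by linarith [sqrt_two_bounds], hz⟩

namespace IsCritical

variable {z : ℝ} (hz : IsCritical z)
include hz

lemma pos : 0 < z := lt_trans (by norm_num) hz.two_fifths_lt

lemma two_mul_lt_one : 2 * z < 1 := by linarith [hz.lt_sqrt_two_sub_one, sqrt_two_bounds]

lemma pow_nonneg (n : ℕ) : 0 ≤ (2 * z) ^ n := by have := hz.pos; positivity

lemma pow_le_one (n : ℕ) : (2 * z) ^ n ≤ 1 :=
  pow_le_one₀ (by linarith [hz.pos]) hz.two_mul_lt_one.le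

lemma mul_pow_le_one (n : ℕ) : (1 - z) * (2 * z) ^ n ≤ 1 :=
  mul_le_one₀ (by linarith [hz.pos]) (hz.pow_nonneg n) (hz.pow_le_one n)

lemma one_add_sqrt_two_mul_lt_one : (1 + √2) * z < 1 := by
  calc (1 + √2) * z < (1 + √2) * (√2 - 1) := by
        gcongr
        exact hz.lt_sqrt_two_sub_one
    _ = 1 := by ring_nf; norm_num

end IsCritical

/-! ### Potentials at the critical parameter -/

namespace PrudentState

variable {m : Bool} {σ : PrudentState} {F : StepFrame} {k l r f i : ℕ} {z : ℝ}

/-- A subharmonic function for the transfer operator at the critical parameter: far from the corners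
of the box, `(2 * z) ^ l` and `(2 * z) ^ r` are the harmonic functions of a path which leaves the
box on the left or on the right. -/
noncomputable def lowerPotential (z : ℝ) : PrudentState → ℝ
  | start => 1
  | outward _ _ l r => max ((2 * z) ^ l) ((2 * z) ^ r)
  | along _ f i _ => max ((2 * z) ^ (f + 1)) ((1 - z) * (2 * z) ^ i)

lemma lowerPotential_le_one (hz : IsCritical z) (σ : PrudentState) : lowerPotential z σ ≤ 1 := by
  cases σ with
  | start => exact le_rfl
  | outward F k l r => exact max_le (hz.pow_le_one _) (hz.pow_le_one _)
  | along F f i k => exact max_le (hz.pow_le_one _) (hz.mul_pow_le_one _)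

lemma le_lowerPotential_advance (hz : IsCritical z) (F : StepFrame) (f i k : ℕ) :
    (2 * z) ^ f ≤ lowerPotential z (advance F f i k) ∧
      (1 - z) * (2 * z) ^ (i + 1) ≤ lowerPotential z (advance F f i k) := by
  cases f with
  | zero => exact ⟨le_max_left _ _, le_max_of_le_left (hz.mul_pow_le_one _)⟩
  | succ f => exact ⟨le_max_left _ _, le_max_right _ _⟩

theorem lowerPotential_le_transfer (hz : IsCritical z) (σ : PrudentState) :
    lowerPotential z σ ≤ z * transfer m false (lowerPotential z) σ := by
  have hz0 := hz.pos
  rcases σ with _ | ⟨F, k, l, r⟩ | ⟨F, f, i, k⟩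
  · simp only [transfer_false_start, lowerPotential, pow_zero, max_self]
    linarith [hz.two_fifths_lt]
  · have harmonic (n : ℕ) : (2 * z) ^ n =
        z * ((2 * z) ^ n + (2 * z) ^ n + (1 - z) * (2 * z) ^ (n + 1)) := by
      linear_combination (2 * z) ^ n * hz.cubic
    obtain ⟨hl, hr'⟩ := le_lowerPotential_advance hz F.swap l r k
    obtain ⟨hr, hl'⟩ := le_lowerPotential_advance hz F.swap.reverse r l k
    have hout : lowerPotential z (outward F (k + 1) l r) = max ((2 * z) ^ l) ((2 * z) ^ r) := rfl
    rw [transfer_false_outward, hout]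
    refine max_le ((harmonic l).trans_le ?_) ((harmonic r).trans_le ?_) <;>
      refine mul_le_mul_of_nonneg_left ?_ hz0.le
    · linarith [le_max_left ((2 * z) ^ l) ((2 * z) ^ r)]
    · linarith [le_max_right ((2 * z) ^ l) ((2 * z) ^ r)]
  · obtain ⟨hf, hi⟩ := le_lowerPotential_advance hz F f i k
    have hout : lowerPotential z (outward F.swap (k + 1) f i) = max ((2 * z) ^ f) ((2 * z) ^ i) :=
      rfl
    rw [transfer_false_along, hout]
    refine max_le ?_ ?_
    · calc (2 * z) ^ (f + 1) = z * ((2 * z) ^ f + (2 * z) ^ f) := by ring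
        _ ≤ _ := by
          gcongr
          exact le_max_left _ _
    · calc (1 - z) * (2 * z) ^ i = z * ((1 - z) * (2 * z) ^ (i + 1) + (2 * z) ^ i) := by
            linear_combination (2 * z) ^ i * hz.cubic
        _ ≤ _ := by
          gcongr
          exact le_max_right _ _

theorem lowerPotential_le_pow_mul_count (hz : IsCritical z) (n : ℕ) (σ : PrudentState) :
    lowerPotential z σ ≤ z ^ n * count m (List.replicate n false) σ := by
  have hz0 := hz.pos
  induction n generalizing σ with
  | zero => simpa [count] using lowerPotential_le_one hz σ
  | succ n ih =>
    calc lowerPotential z σ ≤ z * transfer m false (lowerPotential z) σ :=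
          lowerPotential_le_transfer hz σ
      _ ≤ z * transfer m false (fun c => z ^ n * count m (List.replicate n false) c) σ := by
          gcongr
          exact transfer_mono ih
      _ = _ := by rw [List.replicate_succ, count_cons, transfer_const_mul, pow_succ', mul_assoc]

/-- A bounded weight whose decrease from `n` to `n + 1` absorbs the error term `(2 * z) ^ n` made
when the path turns around a corner of the box. -/
noncomputable def cornerWeight (z : ℝ) (n : ℕ) : ℝ := Real.exp ((2 * z) ^ n / (1 - 2 * z))

lemma one_le_cornerWeight (hz : IsCritical z) (n : ℕ) : 1 ≤ cornerWeight z n :=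
  Real.one_le_exp (div_nonneg (hz.pow_nonneg n) (sub_nonneg.2 hz.two_mul_lt_one.le))

lemma cornerWeight_succ_mul_le (hz : IsCritical z) (n : ℕ) :
    cornerWeight z (n + 1) * (1 + (2 * z) ^ n) ≤ cornerWeight z n := by
  have hne : 1 - 2 * z ≠ 0 := (sub_pos.2 hz.two_mul_lt_one).ne'
  calc cornerWeight z (n + 1) * (1 + (2 * z) ^ n)
      ≤ cornerWeight z (n + 1) * Real.exp ((2 * z) ^ n) := by
        rw [add_comm 1]
        exact mul_le_mul_of_nonneg_left (Real.add_one_le_exp _) (Real.exp_pos _).le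
    _ = cornerWeight z n := by
        rw [cornerWeight, cornerWeight, ← Real.exp_add]
        congr 1
        field_simp
        ring

lemma cornerWeight_antitone (hz : IsCritical z) : Antitone (cornerWeight z) := by
  refine antitone_nat_of_succ_le fun n => le_trans ?_ (cornerWeight_succ_mul_le hz n)
  exact le_mul_of_one_le_right (Real.exp_pos _).le (le_add_of_nonneg_right (hz.pow_nonneg n))

/-- A bounded superharmonic function for the transfer operator at the critical parameter: the sum
instead of the maximum of the two terms of `lowerPotential`, corrected by weights at the corners. -/
noncomputable def upperPotential (z : ℝ) : PrudentState → ℝ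
  | start => 8 * (cornerWeight z 0 * cornerWeight z 0)
  | outward _ k l r => cornerWeight z (l + r + 1) * cornerWeight z k * ((2 * z) ^ l + (2 * z) ^ r)
  | along _ f i k =>
    cornerWeight z (f + i + 1) * cornerWeight z k * ((2 * z) ^ (f + 1) + (1 - z) * (2 * z) ^ i)

lemma cornerWeight_mul_nonneg (z : ℝ) (a b : ℕ) : 0 ≤ cornerWeight z a * cornerWeight z b :=
  mul_nonneg (Real.exp_pos _).le (Real.exp_pos _).le

lemma one_le_cornerWeight_mul (hz : IsCritical z) (a b : ℕ) :
    1 ≤ cornerWeight z a * cornerWeight z b :=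
  one_le_mul_of_one_le_of_one_le (one_le_cornerWeight hz a) (one_le_cornerWeight hz b)

lemma cornerWeight_mul_le (hz : IsCritical z) (a b : ℕ) :
    cornerWeight z a * cornerWeight z b ≤ cornerWeight z 0 * cornerWeight z 0 :=
  mul_le_mul (cornerWeight_antitone hz a.zero_le) (cornerWeight_antitone hz b.zero_le)
    (Real.exp_pos _).le (Real.exp_pos _).le

lemma upperPotential_nonneg (hz : IsCritical z) (σ : PrudentState) : 0 ≤ upperPotential z σ := by
  have hmul (n : ℕ) : 0 ≤ (1 - z) * (2 * z) ^ n :=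
    mul_nonneg (by linarith [hz.two_mul_lt_one, hz.pos]) (hz.pow_nonneg n)
  have hW := cornerWeight_mul_nonneg z
  rcases σ with _ | ⟨_, k, l, r⟩ | ⟨_, f, i, k⟩
  · exact mul_nonneg (by norm_num) (hW 0 0)
  · exact mul_nonneg (hW _ _) (add_nonneg (hz.pow_nonneg l) (hz.pow_nonneg r))
  · exact mul_nonneg (hW _ _) (add_nonneg (hz.pow_nonneg (f + 1)) (hmul i))

lemma le_upperPotential_outward (hz : IsCritical z) :
    (2 * z) ^ l + (2 * z) ^ r ≤ upperPotential z (outward F k l r) :=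
  le_mul_of_one_le_left (add_nonneg (hz.pow_nonneg l) (hz.pow_nonneg r))
    (one_le_cornerWeight_mul hz _ _)

lemma le_upperPotential_along (hz : IsCritical z) :
    (2 * z) ^ (f + 1) ≤ upperPotential z (along F f i k) := by
  have hlast : 0 ≤ (1 - z) * (2 * z) ^ i :=
    mul_nonneg (by linarith [hz.two_mul_lt_one, hz.pos]) (hz.pow_nonneg i)
  exact (le_add_of_nonneg_right hlast).trans
    (le_mul_of_one_le_left (add_nonneg (hz.pow_nonneg _) hlast) (one_le_cornerWeight_mul hz _ _))

lemma upperPotential_le (hz : IsCritical z) (σ : PrudentState) :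
    upperPotential z σ ≤ 8 * (cornerWeight z 0 * cornerWeight z 0) := by
  have hbound {a b : ℕ} {x : ℝ} (hx : x ≤ 8) : cornerWeight z a * cornerWeight z b * x ≤
      8 * (cornerWeight z 0 * cornerWeight z 0) := by
    rw [mul_comm 8]
    exact (mul_le_mul_of_nonneg_left hx (cornerWeight_mul_nonneg z a b)).trans
      (mul_le_mul_of_nonneg_right (cornerWeight_mul_le hz a b) (by norm_num))
  rcases σ with _ | ⟨_, k, l, r⟩ | ⟨_, f, i, k⟩
  · exact le_rfl
  · exact hbound (by linarith [hz.pow_le_one l, hz.pow_le_one r])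
  · exact hbound (by linarith [hz.pow_le_one (f + 1), hz.mul_pow_le_one i])

lemma upperPotential_advance_le (hz : IsCritical z) : upperPotential z (advance F f i k) ≤
    cornerWeight z (f + i + 1) * cornerWeight z k *
      ((2 * z) ^ f + (1 - z) * (2 * z) ^ (i + 1)) := by
  cases f with
  | zero =>
    have hi : 0 ≤ (1 - z) * (2 * z) ^ (i + 1) :=
      mul_nonneg (by linarith [hz.two_mul_lt_one, hz.pos]) (hz.pow_nonneg _)
    calc upperPotential z (advance F 0 i k)
        = cornerWeight z (i + 1) * (cornerWeight z (k + 1) * (1 + (2 * z) ^ k)) := by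
          simp only [advance, upperPotential, zero_add, pow_zero]
          ring
      _ ≤ cornerWeight z (i + 1) * cornerWeight z k :=
          mul_le_mul_of_nonneg_left (cornerWeight_succ_mul_le hz k) (Real.exp_pos _).le
      _ ≤ _ := by
          rw [zero_add, pow_zero]
          exact le_mul_of_one_le_right (cornerWeight_mul_nonneg z _ _) (le_add_of_nonneg_right hi)
  | succ f =>
    rw [advance, upperPotential, add_right_comm f 1 i, add_assoc f i 1]

lemma upperPotential_outward_succ_le (hz : IsCritical z) :
    upperPotential z (outward F (k + 1) l r) ≤ cornerWeight z (l + r + 1) * cornerWeight z k *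
      ((2 * z) ^ l + (2 * z) ^ r) :=
  mul_le_mul_of_nonneg_right
    (mul_le_mul_of_nonneg_left (cornerWeight_antitone hz k.le_succ) (Real.exp_pos _).le)
    (add_nonneg (hz.pow_nonneg l) (hz.pow_nonneg r))

theorem transfer_upperPotential_le (hz : IsCritical z) (σ : PrudentState) :
    z * transfer m false (upperPotential z) σ ≤ upperPotential z σ := by
  have hz0 := hz.pos
  rcases σ with _ | ⟨F, k, l, r⟩ | ⟨F, f, i, k⟩
  · have hW := cornerWeight_mul_le hz 1 1
    simp only [transfer_false_start, upperPotential, pow_zero, zero_add]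
    nlinarith [hz.two_mul_lt_one, cornerWeight_mul_nonneg z 1 1]
  · set W := cornerWeight z (l + r + 1) * cornerWeight z k with hW
    have hadvance : upperPotential z (advance F.swap.reverse r l k) ≤
        W * ((2 * z) ^ r + (1 - z) * (2 * z) ^ (l + 1)) := by
      rw [hW, add_comm l r]
      exact upperPotential_advance_le hz
    rw [transfer_false_outward]
    calc _ ≤ z * (W * ((2 * z) ^ l + (2 * z) ^ r) +
          W * ((2 * z) ^ l + (1 - z) * (2 * z) ^ (r + 1)) +
          W * ((2 * z) ^ r + (1 - z) * (2 * z) ^ (l + 1))) := by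
          gcongr
          · exact upperPotential_outward_succ_le hz
          · exact upperPotential_advance_le hz
      _ = W * ((2 * z) ^ l + (2 * z) ^ r) := by
          linear_combination -(W * ((2 * z) ^ l + (2 * z) ^ r)) * hz.cubic
  · set W := cornerWeight z (f + i + 1) * cornerWeight z k
    rw [transfer_false_along]
    calc _ ≤ z * (W * ((2 * z) ^ f + (1 - z) * (2 * z) ^ (i + 1)) +
          W * ((2 * z) ^ f + (2 * z) ^ i)) := by
          gcongr
          · exact upperPotential_advance_le hz
          · exact upperPotential_outward_succ_le hz
      _ = W * ((2 * z) ^ (f + 1) + (1 - z) * (2 * z) ^ i) := by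
          linear_combination -(W * (2 * z) ^ i) * hz.cubic

/-- The eigenvector, for the eigenvalue `1 + √2`, of the transfer operator far from the corners of
the box; the same eigenvalue bounds the growth of paths whose range is constant along one axis. -/
noncomputable def bulkPotential : PrudentState → ℝ
  | along _ _ _ _ => 1
  | _ => √2

lemma one_le_bulkPotential (σ : PrudentState) : 1 ≤ bulkPotential σ := by
  cases σ <;> simp [bulkPotential]

lemma bulkPotential_le (σ : PrudentState) : bulkPotential σ ≤ √2 := by
  cases σ <;> simp [bulkPotential]

lemma bulkPotential_advance_le (hz : IsCritical z) :
    bulkPotential (advance F f i k) ≤ 1 + (√2 - 1) * (2 * z) ^ f := by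
  have hsqrt : 0 ≤ √2 - 1 := by linarith [sqrt_two_bounds]
  cases f with
  | zero => simp [advance, bulkPotential]
  | succ f => exact le_add_of_nonneg_right (mul_nonneg hsqrt (hz.pow_nonneg _))

theorem transfer_bulkPotential_le (hz : IsCritical z) (σ : PrudentState) :
    z * transfer m false bulkPotential σ ≤
      (1 + √2) * z * bulkPotential σ + upperPotential z σ := by
  have hz0 := hz.pos
  have hz1 := hz.two_mul_lt_one
  have hsqrt := sqrt_two_bounds
  have hsq : √2 * √2 = 2 := Real.mul_self_sqrt (by norm_num)
  have hcoeff : z * (√2 - 1) ≤ 2 * z := by nlinarith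
  rcases σ with _ | ⟨F, k, l, r⟩ | ⟨F, f, i, k⟩
  · simp only [transfer_false_start, bulkPotential, upperPotential]
    nlinarith [one_le_cornerWeight_mul hz 0 0]
  · rw [transfer_false_outward]
    calc _ ≤ z * (√2 + (1 + (√2 - 1) * (2 * z) ^ l) + (1 + (√2 - 1) * (2 * z) ^ r)) := by
          gcongr
          · exact le_rfl
          · exact bulkPotential_advance_le hz
          · exact bulkPotential_advance_le hz
      _ = (1 + √2) * z * √2 + z * (√2 - 1) * ((2 * z) ^ l + (2 * z) ^ r) := by
          linear_combination -z * hsq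
      _ ≤ (1 + √2) * z * √2 + ((2 * z) ^ l + (2 * z) ^ r) := by
          gcongr
          exact mul_le_of_le_one_left (add_nonneg (hz.pow_nonneg l) (hz.pow_nonneg r))
            (hcoeff.trans hz1.le)
      _ ≤ _ := add_le_add_right (le_upperPotential_outward hz) _
  · rw [transfer_false_along]
    calc _ ≤ z * (1 + (√2 - 1) * (2 * z) ^ f + √2) := by
          gcongr
          · exact bulkPotential_advance_le hz
          · exact le_rfl
      _ = (1 + √2) * z * 1 + z * (√2 - 1) * (2 * z) ^ f := by ring
      _ ≤ (1 + √2) * z * 1 + (2 * z) ^ (f + 1) := by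
          rw [pow_succ']
          gcongr
      _ ≤ _ := add_le_add_right (le_upperPotential_along hz) _

theorem pow_mul_count_le (hz : IsCritical z) (n : ℕ) (σ : PrudentState) :
    z ^ n * count m (List.replicate n false) σ ≤
      (1 - ((1 + √2) * z) ^ n) / (1 - (1 + √2) * z) * upperPotential z σ +
        ((1 + √2) * z) ^ n * bulkPotential σ := by
  have hz0 := hz.pos
  set q := (1 + √2) * z
  have hq1 : q < 1 := hz.one_add_sqrt_two_mul_lt_one
  have hq0 : 0 ≤ q := by positivity
  have hne : 1 - q ≠ 0 := (sub_pos.2 hq1).ne'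
  induction n generalizing σ with
  | zero => simpa [count] using one_le_bulkPotential σ
  | succ n ih =>
    have hK : 0 ≤ (1 - q ^ n) / (1 - q) :=
      div_nonneg (sub_nonneg.2 (pow_le_one₀ hq0 hq1.le)) (sub_pos.2 hq1).le
    calc z ^ (n + 1) * count m (List.replicate (n + 1) false) σ
        = z * transfer m false (fun c => z ^ n * count m (List.replicate n false) c) σ := by
          rw [List.replicate_succ, count_cons, transfer_const_mul, pow_succ', mul_assoc]
      _ ≤ z * transfer m false (fun c =>
            (1 - q ^ n) / (1 - q) * upperPotential z c + q ^ n * bulkPotential c) σ := by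
          gcongr
          exact transfer_mono ih
      _ = (1 - q ^ n) / (1 - q) * (z * transfer m false (upperPotential z) σ) +
            q ^ n * (z * transfer m false bulkPotential σ) := by
          rw [transfer_add, transfer_const_mul, transfer_const_mul]
          ring
      _ ≤ (1 - q ^ n) / (1 - q) * upperPotential z σ +
            q ^ n * (q * bulkPotential σ + upperPotential z σ) := by
          gcongr
          · exact transfer_upperPotential_le hz σ
          · exact transfer_bulkPotential_le hz σ
      _ = _ := by
          field_simp
          ring

theorem exists_pow_mul_count_le (hz : IsCritical z) :
    ∃ C : ℝ, 0 < C ∧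
      ∀ m n σ, z ^ n * (count m (List.replicate n false) σ : ℝ) ≤ C := by
  have hz0 := hz.pos
  have hq0 : 0 ≤ (1 + √2) * z := by positivity
  have hq1 : 0 < 1 - (1 + √2) * z := sub_pos.2 hz.one_add_sqrt_two_mul_lt_one
  have hpow (n : ℕ) : ((1 + √2) * z) ^ n ≤ 1 := pow_le_one₀ hq0 (sub_pos.1 hq1).le
  refine ⟨1 / (1 - (1 + √2) * z) * (8 * (cornerWeight z 0 * cornerWeight z 0)) + 1 * √2,
    add_pos_of_nonneg_of_pos ?_ (by positivity), fun m n σ => (pow_mul_count_le hz n σ).trans ?_⟩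
  · exact mul_nonneg (one_div_nonneg.2 hq1.le)
      (mul_nonneg (by norm_num) (cornerWeight_mul_nonneg z 0 0))
  · gcongr
    · exact upperPotential_nonneg hz σ
    · exact sub_le_self 1 (pow_nonneg hq0 n)
    · exact upperPotential_le hz σ
    · exact zero_le_one.trans (one_le_bulkPotential σ)
    · exact hpow n
    · exact bulkPotential_le σ

lemma transfer_true {φ : PrudentState → ℝ} :
    transfer m true φ σ = transfer m false (fun c => if c.expands m then 0 else φ c) σ := by
  simp only [transfer, Bool.true_and, Bool.false_and, Bool.false_eq_true, if_false]

theorem transfer_true_bulkPotential_le (σ : PrudentState) :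
    transfer m true bulkPotential σ ≤ (1 + √2) * bulkPotential σ := by
  have hsqrt := sqrt_two_bounds
  have hsq : √2 * √2 = 2 := Real.mul_self_sqrt (by norm_num)
  set φ : PrudentState → ℝ := fun c => if c.expands m then 0 else bulkPotential c with hφ
  have houtward (F : StepFrame) (k a b : ℕ) :
      φ (outward F k a b) = if F.axis = m then 0 else √2 := by
    simp [hφ, expands, bulkPotential]
  have hadvance (F : StepFrame) (a b k : ℕ) :
      φ (advance F a b k) ≤ if F.axis = m then 1 else √2 := by
    cases a <;> by_cases hF : F.axis = m <;> simp [hφ, advance, expands, bulkPotential, hF]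
  rw [transfer_true, ← hφ]
  rcases σ with _ | ⟨F, k, l, r⟩ | ⟨F, f, i, k⟩
  · simp only [transfer_false_start, houtward, bulkPotential]
    cases m <;> norm_num <;> linarith
  · have hl := hadvance F.swap l r k
    have hr := hadvance F.swap.reverse r l k
    simp only [transfer_false_outward, houtward, bulkPotential]
    by_cases hF : F.axis = m
    · subst hF
      simp only [StepFrame.swap, StepFrame.reverse, Bool.not_eq_self, if_true, if_false]
        at hl hr ⊢
      linarith
    · simp only [StepFrame.swap, StepFrame.reverse, Bool.not_eq.2 hF, hF, if_true, if_false]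
        at hl hr ⊢
      linarith
  · have hf := hadvance F f i k
    rw [transfer_false_along, houtward, bulkPotential]
    by_cases hF : F.axis = m
    · subst hF
      simp only [StepFrame.swap, Bool.not_eq_self, if_true, if_false] at hf ⊢
      linarith
    · simp only [StepFrame.swap, Bool.not_eq.2 hF, hF, if_true, if_false] at hf ⊢
      linarith

theorem count_replicate_true_le (k : ℕ) (σ : PrudentState) :
    (count m (List.replicate k true) σ : ℝ) ≤ (1 + √2) ^ k * bulkPotential σ := by
  induction k generalizing σ with
  | zero => simpa [count] using one_le_bulkPotential σ
  | succ k ih =>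
    calc (count m (List.replicate (k + 1) true) σ : ℝ)
        = transfer m true (fun c => count m (List.replicate k true) c) σ := count_cons
      _ ≤ transfer m true (fun c => (1 + √2) ^ k * bulkPotential c) σ := transfer_mono ih
      _ = (1 + √2) ^ k * transfer m true bulkPotential σ := transfer_const_mul
      _ ≤ (1 + √2) ^ k * ((1 + √2) * bulkPotential σ) := by
          gcongr
          exact transfer_true_bulkPotential_le σ
      _ = _ := by rw [pow_succ, mul_assoc]

theorem exists_pow_mul_count_append_le (hz : IsCritical z) :
    ∃ C : ℝ, 0 < C ∧ ∀ m s k n, z ^ (s + k + n) * (count m (List.replicate s false ++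
      (List.replicate k true ++ List.replicate n false)) start : ℝ) ≤
        C * ((1 + √2) * z) ^ k := by
  obtain ⟨C, hC, hcount⟩ := exists_pow_mul_count_le hz
  have hz0 := hz.pos
  refine ⟨C * √2 * C, by positivity, fun m s k n => ?_⟩
  have hlast (c : PrudentState) :
      (count m (List.replicate n false) c : ℝ) ≤ C / z ^ n :=
    (le_div_iff₀' (pow_pos hz0 n)).2 (hcount m n c)
  have hmiddle (c : PrudentState) : (count m (List.replicate k true ++
      List.replicate n false) c : ℝ) ≤ C / z ^ n * ((1 + √2) ^ k * √2) := by
    refine (count_append_le hlast c).trans ?_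
    gcongr
    refine (count_replicate_true_le k c).trans ?_
    gcongr
    exact bulkPotential_le c
  calc _ ≤ z ^ (s + k + n) * (C / z ^ n * ((1 + √2) ^ k * √2) *
        count m (List.replicate s false) start) := by
        gcongr
        exact count_append_le hmiddle start
    _ = C * √2 * ((1 + √2) * z) ^ k * (z ^ s * count m (List.replicate s false) start) := by
        rw [mul_pow, pow_add, pow_add]
        field_simp
    _ ≤ C * √2 * ((1 + √2) * z) ^ k * C := by
        gcongr
        exact hcount m s start
    _ = _ := by ring

end PrudentState

/-! ### Excursions -/

/-- The number of values taken by the coordinate of `q` along the axis `m` up to time `t`. -/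
def rangeSize (m : Bool) (q : ℕ → ℤ × ℤ) (t : ℕ) : ℕ :=
  ((Finset.range (t + 1)).image fun i => axisCoord m (q i)).card

section rangeSize

variable {m : Bool} {q : ℕ → ℤ × ℤ} {L t a b : ℕ} {d : ℤ × ℤ}

lemma rangeSize_mono (m : Bool) (q : ℕ → ℤ × ℤ) : Monotone (rangeSize m q) := fun _ _ h =>
  Finset.card_le_card (Finset.image_subset_image (Finset.range_mono (Nat.succ_le_succ h)))

lemma rangeSize_pos (m : Bool) (q : ℕ → ℤ × ℤ) (t : ℕ) : 0 < rangeSize m q t :=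
  Finset.card_pos.2 (Finset.nonempty_range_add_one.image _)

lemma rangeSize_lt_succ_iff : rangeSize m q t < rangeSize m q (t + 1) ↔ Expands m q t := by
  have hmem : axisCoord m (q (t + 1)) ∉ (Finset.range (t + 1)).image (fun i => axisCoord m (q i)) ↔
      Expands m q t := by
    simp only [Finset.mem_image, Finset.mem_range, Nat.lt_succ_iff, not_exists, not_and, Expands,
      ne_eq]
  rw [← hmem, rangeSize, rangeSize, Finset.range_add_one (n := t + 1), Finset.image_insert,
    Finset.card_insert_eq_ite]
  split_ifs with h <;> simp [h]

lemma IsStep.axisCoord_eq_zero_or (hd : IsStep d) (m : Bool) :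
    axisCoord m d = 0 ∨ axisCoord (!m) d = 0 := by
  rcases hd with rfl | rfl | rfl | rfl <;> cases m <;> simp [axisCoord]

lemma IsStep.natAbs_axisCoord_le (hd : IsStep d) (m : Bool) : (axisCoord m d).natAbs ≤ 1 := by
  rcases hd with rfl | rfl | rfl | rfl <;> cases m <;> simp [axisCoord]

lemma Expands.not_expands_not (h : Expands m q t) (hd : IsStep (q (t + 1) - q t)) :
    ¬Expands (!m) q t := fun h' => by
  have hm := h t le_rfl
  have hm' := h' t le_rfl
  rcases hd.axisCoord_eq_zero_or m with h0 | h0 <;> rw [map_sub] at h0 <;> omega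

lemma natAbs_axisCoord_sub_le (hq : ∀ t < L, IsStep (q (t + 1) - q t)) (m : Bool) (hab : a ≤ b)
    (hb : b ≤ L) : (axisCoord m (q b) - axisCoord m (q a)).natAbs ≤ b - a := by
  induction b, hab using Nat.le_induction with
  | base => simp
  | succ b hab ih =>
    have hlast := (hq b (by omega)).natAbs_axisCoord_le m
    have := ih (by omega)
    rw [map_sub] at hlast
    omega

end rangeSize

section nextTime

variable {L a b t : ℕ} {f : ℕ → ℕ}

lemma le_of_nextTime_eq_some (h : nextTime L f a = some b) :
    a ≤ b ∧ b < L ∧ f b < f (b + 1) ∧ ∀ t, a ≤ t → t < b → ¬f t < f (t + 1) := by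
  classical
  unfold nextTime at h
  split_ifs at h with hex
  obtain ⟨hlt, hle, hf⟩ := Nat.find_spec hex
  rw [Option.some_inj] at h
  have hfind : Nat.find hex = b + 1 := by omega
  rw [hfind, Nat.add_sub_cancel] at hf
  refine ⟨by omega, by omega, hf, fun t hat htb hft => ?_⟩
  exact Nat.find_min hex (m := t + 1) (by omega) ⟨by omega, by omega, hft⟩

lemma not_lt_succ_of_nextTime_eq_none (h : nextTime L f a = none) (hat : a ≤ t) (htL : t < L) :
    ¬f t < f (t + 1) := by
  unfold nextTime at h
  split_ifs at h with hex
  exact fun hft => hex ⟨t + 1, by omega, by omega, hft⟩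

lemma nextTime_getD (f : ℕ → ℕ) (ha : a ≤ L) :
    a ≤ (nextTime L f a).getD L ∧ (nextTime L f a).getD L ≤ L ∧
      ∀ t, a ≤ t → t < (nextTime L f a).getD L → ¬f t < f (t + 1) := by
  cases hb : nextTime L f a with
  | none => exact ⟨ha, le_rfl, fun t hat htL => not_lt_succ_of_nextTime_eq_none hb hat htL⟩
  | some b =>
    obtain ⟨hab, hbL, -, hmin⟩ := le_of_nextTime_eq_some hb
    exact ⟨hab, hbL.le, hmin⟩

end nextTime

section Excursions

variable {L i j k a b : ℕ} {π : Fin (L + 1) → ℤ × ℤ}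

lemma image_Iic_eq_image_range (m : Bool) (π : Fin (L + 1) → ℤ × ℤ) (t : ℕ) :
    (Finset.Iic (⟨min t L, by omega⟩ : Fin (L + 1))).image (fun i => axisCoord m (π i)) =
      (Finset.range (t + 1)).image fun i => axisCoord m (pathAt L π i) := by
  ext x
  simp only [Finset.mem_image, Finset.mem_Iic, Finset.mem_range, Fin.le_def]
  constructor
  · exact fun ⟨i, hi, h⟩ => ⟨i, by omega, by rwa [pathAt_val]⟩
  · exact fun ⟨i, hi, h⟩ => ⟨⟨min i L, by omega⟩, by simp only; omega, h⟩

lemma heightAt_eq_rangeSize (L : ℕ) (π : Fin (L + 1) → ℤ × ℤ) :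
    heightAt L π = rangeSize true (pathAt L π) :=
  funext fun t => congrArg Finset.card (image_Iic_eq_image_range true π t)

lemma widthAt_eq_rangeSize (L : ℕ) (π : Fin (L + 1) → ℤ × ℤ) :
    widthAt L π = rangeSize false (pathAt L π) :=
  funext fun t => congrArg Finset.card (image_Iic_eq_image_range false π t)

/-- The axis along which the range grows right after the end `s_{i+1}` of an excursion, numbered
as in `axisCoord`. -/
def excursionAxis (i : ℕ) : Bool := decide (Even i)

lemma excursionAxis_succ (i : ℕ) : excursionAxis (i + 1) = !excursionAxis i := by
  by_cases h : Even i <;> simp [excursionAxis, Nat.even_add_one, h]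

lemma excTime_succ (π : Fin (L + 1) → ℤ × ℤ) (i : ℕ) : excTime L π (i + 1) =
    (excTime L π i).bind (nextTime L (rangeSize (excursionAxis i) (pathAt L π))) := by
  rw [excTime, heightAt_eq_rangeSize, widthAt_eq_rangeSize]
  by_cases h : Even i <;> simp [excursionAxis, h]

lemma crossesRange_succ_iff : crossesRange L π (i + 1) ↔
    (axisCoord (excursionAxis i) (pathAt L π (excEnd L π (i + 1))) -
        axisCoord (excursionAxis i) (pathAt L π (excEnd L π i))).natAbs =
      rangeSize (excursionAxis i) (pathAt L π) (excEnd L π (i + 1)) - 1 := by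
  have heven : (i + 1) % 2 = 1 ↔ Even i := by
    rw [Nat.even_iff]
    omega
  rw [crossesRange, heightAt_eq_rangeSize, widthAt_eq_rangeSize]
  by_cases h : Even i <;>
    simp only [heven, excursionAxis, h, if_true, if_false, decide_true, decide_false] <;> rfl

lemma excTime_isSome_of_le (h : (excTime L π j).isSome) (hij : i ≤ j) :
    (excTime L π i).isSome := by
  induction j, hij using Nat.le_induction with
  | base => exact h
  | succ j _ ih =>
    rw [excTime_succ] at h
    exact ih (Option.isSome_of_isSome_bind h)

lemma excTime_lastIdx_isSome (h : lastIdx L π ≠ 0) : (excTime L π (lastIdx L π)).isSome := by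
  refine Nat.sSup_mem (s := {i | (excTime L π i).isSome}) ⟨0, rfl⟩ ?_
  by_contra hb
  exact h (Nat.sSup_of_not_bddAbove hb)

lemma excTime_isSome_of_succ_le_numExc (h : i + 1 ≤ numExc L π) : (excTime L π i).isSome := by
  have hi : i ≤ lastIdx L π := by
    unfold numExc at h
    split_ifs at h <;> omega
  rcases i.eq_zero_or_pos with rfl | hpos
  · rfl
  · exact excTime_isSome_of_le (excTime_lastIdx_isSome (by omega)) hi

theorem rangeSize_at_excTime (hπ : ∀ t < L, IsStep (pathAt L π (t + 1) - pathAt L π t))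
    (hb : excTime L π (i + 1) = some b) :
    b < L ∧ Expands (excursionAxis i) (pathAt L π) b ∧
      i + 1 ≤ 2 * rangeSize (excursionAxis i) (pathAt L π) b ∧
        i + 2 ≤ 2 * rangeSize (!excursionAxis i) (pathAt L π) b := by
  have hpos := fun m => rangeSize_pos m (pathAt L π)
  induction i generalizing b with
  | zero =>
    rw [excTime_succ, excTime, Option.bind_some] at hb
    obtain ⟨-, hbL, hgrow, -⟩ := le_of_nextTime_eq_some hb
    have h1 := hpos (excursionAxis 0) b
    have h2 := hpos (!excursionAxis 0) b
    exact ⟨hbL, rangeSize_lt_succ_iff.1 hgrow, by omega, by omega⟩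
  | succ i ih =>
    rw [excTime_succ, Option.bind_eq_some_iff] at hb
    obtain ⟨a, ha, hb⟩ := hb
    obtain ⟨haL, hexp, hsize, hsize'⟩ := ih ha
    rw [excursionAxis_succ] at hb ⊢
    obtain ⟨hab, hbL, hgrow, -⟩ := le_of_nextTime_eq_some hb
    rw [rangeSize_lt_succ_iff] at hgrow
    have hne : a ≠ b := by
      rintro rfl
      exact hexp.not_expands_not (hπ a haL) hgrow
    have hlt := rangeSize_lt_succ_iff.2 hexp
    have hle := rangeSize_mono (excursionAxis i) (pathAt L π) (show a + 1 ≤ b by omega)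
    have hle' := rangeSize_mono (!excursionAxis i) (pathAt L π) hab
    rw [Bool.not_not]
    exact ⟨hbL, hgrow, by omega, by omega⟩

/-- The lateral coordinate moves by at most one per step, so a crossing of a range of size `k + 1`
takes `k` steps, none of which enlarges this range. -/
theorem exists_window_of_crossesRange (hπ : ∀ t < L, IsStep (pathAt L π (t + 1) - pathAt L π t))
    (hk : 2 * k + 2 ≤ i) (hi : i ≤ numExc L π) (hcross : crossesRange L π i) :
    ∃ m s, s + k ≤ L ∧ ∀ t, s ≤ t → t < s + k → ¬Expands m (pathAt L π) t := by
  obtain ⟨i, rfl⟩ : ∃ j, i = j + 1 + 1 := ⟨i - 2, by omega⟩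
  obtain ⟨a, ha⟩ := Option.isSome_iff_exists.1 (excTime_isSome_of_succ_le_numExc hi)
  obtain ⟨haL, -, -, hsize⟩ := rangeSize_at_excTime hπ ha
  have hstart : excEnd L π (i + 1) = a := by rw [excEnd, ha, Option.getD_some]
  have hend : excEnd L π (i + 1 + 1) =
      (nextTime L (rangeSize (excursionAxis (i + 1)) (pathAt L π)) a).getD L := by
    rw [excEnd, excTime_succ, ha, Option.bind_some]
  obtain ⟨hab, hbL, hwindow⟩ :=
    nextTime_getD (rangeSize (excursionAxis (i + 1)) (pathAt L π)) haL.le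
  rw [← hend] at hab hbL hwindow
  rw [crossesRange_succ_iff, hstart] at hcross
  rw [← excursionAxis_succ] at hsize
  have hlength := natAbs_axisCoord_sub_le hπ (excursionAxis (i + 1)) hab hbL
  have hmono := rangeSize_mono (excursionAxis (i + 1)) (pathAt L π) hab
  refine ⟨excursionAxis (i + 1), a, by omega, fun t hat htk => ?_⟩
  rw [← rangeSize_lt_succ_iff]
  exact hwindow t hat (by omega)

end Excursions

/-! ### The union bound -/

section Counting

variable {L : ℕ} {z : ℝ}

lemma restrictedPrudentSet_replicate_false (L : ℕ) (m : Bool) :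
    restrictedPrudentSet L m (List.replicate L false) = prudentSet L := by
  ext π
  simp [restrictedPrudentSet, List.getElem?_replicate]

theorem one_le_pow_mul_ncard_prudentSet (hz : IsCritical z) (L : ℕ) :
    1 ≤ z ^ L * (prudentSet L).ncard := by
  rw [← restrictedPrudentSet_replicate_false L true,
    ncard_restrictedPrudentSet List.length_replicate]
  exact PrudentState.lowerPotential_le_pow_mul_count hz L .start

theorem finite_prudentSet (L : ℕ) : (prudentSet L).Finite := by
  obtain ⟨z, hz⟩ := exists_isCritical
  refine finite_of_ncard_ne_zero fun h => ?_
  have := one_le_pow_mul_ncard_prudentSet hz L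
  rw [h, Nat.cast_zero, mul_zero] at this
  exact this.not_gt zero_lt_one

/-- The prudent paths of length `L` whose range along the axis `m` does not grow during the `k`
steps which follow the time `s`. -/
def confinedPrudentSet (L : ℕ) (m : Bool) (s k : ℕ) : Set (Fin (L + 1) → ℤ × ℤ) :=
  {π | π ∈ prudentSet L ∧ ∀ t, s ≤ t → t < s + k → ¬Expands m (pathAt L π) t}

lemma confinedPrudentSet_subset (m : Bool) (s k n : ℕ) : confinedPrudentSet (s + k + n) m s k ⊆
    restrictedPrudentSet (s + k + n) m
      (List.replicate s false ++ (List.replicate k true ++ List.replicate n false)) := by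
  refine fun π ⟨hπ, hconfined⟩ => ⟨hπ, fun t ht => ?_⟩
  have hwindow : s ≤ t ∧ t < s + k := by grind
  exact hconfined t hwindow.1 hwindow.2

theorem exists_pow_mul_ncard_confinedPrudentSet_le (hz : IsCritical z) :
    ∃ C : ℝ, 0 < C ∧ ∀ L m s k, s + k ≤ L →
      z ^ L * (confinedPrudentSet L m s k).ncard ≤ C * ((1 + √2) * z) ^ k := by
  obtain ⟨C, hC, hcount⟩ := PrudentState.exists_pow_mul_count_append_le hz
  refine ⟨C, hC, fun L m s k hL => ?_⟩
  obtain ⟨n, rfl⟩ := Nat.exists_eq_add_of_le hL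
  have hz0 := hz.pos
  refine le_trans ?_ (hcount m s k n)
  rw [← ncard_restrictedPrudentSet (L := s + k + n) (by simp [add_assoc])]
  gcongr
  · exact (finite_prudentSet _).subset fun π hπ => hπ.1
  · exact confinedPrudentSet_subset m s k n

end Counting

section Probability

variable {L : ℕ} {A B : Set (Fin (L + 1) → ℤ × ℤ)} {z : ℝ}

lemma probUnif_nonneg (L : ℕ) (A : Set (Fin (L + 1) → ℤ × ℤ)) : 0 ≤ probUnif L A :=
  div_nonneg (Nat.cast_nonneg _) (Nat.cast_nonneg _)

lemma probUnif_mono (h : A ⊆ B) : probUnif L A ≤ probUnif L B := by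
  simp only [probUnif, Nat.card_coe_set_eq]
  gcongr
  exact (finite_prudentSet L).subset inter_subset_right

lemma probUnif_le_pow_mul_ncard (hz : IsCritical z) :
    probUnif L A ≤ z ^ L * (A ∩ prudentSet L).ncard := by
  have hz0 := hz.pos
  rw [probUnif, Nat.card_coe_set_eq, Nat.card_coe_set_eq,
    ← mul_div_mul_left _ _ (pow_pos hz0 L).ne']
  exact div_le_self (by positivity) (one_le_pow_mul_ncard_prudentSet hz L)

lemma crossing_inter_prudentSet_subset (L k : ℕ) :
    {π | ∃ i, 2 * k + 2 ≤ i ∧ i ≤ numExc L π ∧ crossesRange L π i} ∩ prudentSet L ⊆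
      ⋃ x ∈ (Finset.univ : Finset Bool) ×ˢ Finset.range (L + 1 - k),
        confinedPrudentSet L x.1 x.2 k := by
  rintro π ⟨⟨i, hk, hi, hcross⟩, hπ⟩
  have hstep := fun t ht => ((mem_prudentSet_iff.1 hπ).2 t ht).1
  obtain ⟨m, s, hs, hconfined⟩ := exists_window_of_crossesRange hstep hk hi hcross
  simp only [mem_iUnion]
  refine ⟨(m, s), ?_, hπ, hconfined⟩
  rw [Finset.mem_product, Finset.mem_range]
  exact ⟨Finset.mem_univ m, by omega⟩

theorem exists_probUnif_crossing_le : ∃ C θ : ℝ, 0 < θ ∧ θ < 1 ∧ ∀ L k : ℕ,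
    probUnif L {π | ∃ i, 2 * k + 2 ≤ i ∧ i ≤ numExc L π ∧ crossesRange L π i} ≤
      C * ((L + 1) * θ ^ k) := by
  obtain ⟨z, hz⟩ := exists_isCritical
  obtain ⟨C, hC, hconfined⟩ := exists_pow_mul_ncard_confinedPrudentSet_le hz
  have hz0 := hz.pos
  refine ⟨2 * C, (1 + √2) * z, by positivity, hz.one_add_sqrt_two_mul_lt_one, fun L k => ?_⟩
  set windows := (Finset.univ : Finset Bool) ×ˢ Finset.range (L + 1 - k) with hwindows
  have hcard : (windows.card : ℝ) ≤ 2 * (L + 1) := by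
    rw [hwindows, Finset.card_product, Finset.card_univ, Fintype.card_bool, Finset.card_range]
    exact_mod_cast Nat.mul_le_mul_left 2 (Nat.sub_le (L + 1) k)
  have hfinite : (⋃ x ∈ windows, confinedPrudentSet L x.1 x.2 k).Finite :=
    (finite_prudentSet L).subset (iUnion₂_subset fun _ _ _ hπ => hπ.1)
  calc probUnif L _
      ≤ z ^ L * (⋃ x ∈ windows, confinedPrudentSet L x.1 x.2 k).ncard := by
        refine (probUnif_le_pow_mul_ncard hz).trans ?_
        gcongr
        exact crossing_inter_prudentSet_subset L k
    _ ≤ z ^ L * ∑ x ∈ windows, ((confinedPrudentSet L x.1 x.2 k).ncard : ℝ) := by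
        gcongr
        exact_mod_cast Finset.set_ncard_biUnion_le windows _
    _ ≤ ∑ _x ∈ windows, C * ((1 + √2) * z) ^ k := by
        rw [Finset.mul_sum]
        refine Finset.sum_le_sum fun x hx => hconfined L x.1 x.2 k ?_
        rw [hwindows, Finset.mem_product, Finset.mem_range] at hx
        omega
    _ = windows.card * (C * ((1 + √2) * z) ^ k) := by rw [Finset.sum_const, nsmul_eq_mul]
    _ ≤ 2 * (L + 1) * (C * ((1 + √2) * z) ^ k) := by gcongr
    _ = 2 * C * ((L + 1) * ((1 + √2) * z) ^ k) := by ring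

end Probability

theorem exists_tendsto_mul_pow_of_le_log {θ : ℝ} (hθ0 : 0 < θ) (hθ1 : θ < 1) :
    ∃ δ : ℝ, 0 < δ ∧ ∃ k : ℕ → ℕ, (∀ᶠ L : ℕ in atTop, (2 * k L + 2 : ℝ) ≤ δ * Real.log L) ∧
      Tendsto (fun L : ℕ => ((L + 1) * θ ^ k L : ℝ)) atTop (nhds 0) := by
  have hlogθ : Real.log θ < 0 := Real.log_neg hθ0 hθ1
  set c : ℝ := 2 / -Real.log θ with hc
  have hc0 : 0 < c := div_pos two_pos (neg_pos.2 hlogθ)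
  refine ⟨2 * c + 1, by positivity, fun L => ⌈c * Real.log L⌉₊, ?_, ?_⟩
  · have hlog : Tendsto (fun L : ℕ => Real.log L) atTop atTop :=
      Real.tendsto_log_atTop.comp tendsto_natCast_atTop_atTop
    filter_upwards [hlog.eventually_ge_atTop 4] with L hL
    linarith [Nat.ceil_lt_add_one (show 0 ≤ c * Real.log L by positivity)]
  · refine squeeze_zero' (Eventually.of_forall fun L => by positivity) ?_
      (tendsto_const_div_atTop_nhds_zero_nat 2)
    filter_upwards [eventually_ge_atTop 1] with L hL
    have hL' : (1 : ℝ) ≤ L := by exact_mod_cast hL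
    have hpow : θ ^ ⌈c * Real.log L⌉₊ ≤ ((L : ℝ) ^ 2)⁻¹ := by
      rw [← Real.log_le_log_iff (by positivity) (by positivity), Real.log_pow, Real.log_inv,
        Real.log_pow]
      calc (⌈c * Real.log L⌉₊ : ℝ) * Real.log θ ≤ c * Real.log L * Real.log θ :=
            mul_le_mul_of_nonpos_right (Nat.le_ceil _) hlogθ.le
        _ = _ := by
            have := hlogθ.ne
            rw [hc, Nat.cast_ofNat]
            field_simp
    calc ((L : ℝ) + 1) * θ ^ ⌈c * Real.log L⌉₊ ≤ (2 * L) * ((L : ℝ) ^ 2)⁻¹ := by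
          gcongr
          linarith
      _ = 2 / L := by field_simp

/-- **Few crossings of the range:** there is `δ > 0` such that with `P_{unif,L}`-probability
tending to `1`, no excursion of index `i` with `δ log L ≤ i ≤ γ_L(π)` crosses the range. -/
theorem no_late_crossing_excursions :
    ∃ δ : ℝ, 0 < δ ∧
      Tendsto (fun L : ℕ =>
          probUnif L {π | ∃ i : ℕ, δ * Real.log L ≤ (i : ℝ) ∧ i ≤ numExc L π ∧
            crossesRange L π i})
        atTop (nhds 0) := by
  obtain ⟨C, θ, hθ0, hθ1, hprob⟩ := exists_probUnif_crossing_le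
  obtain ⟨δ, hδ, k, hk, hlim⟩ := exists_tendsto_mul_pow_of_le_log hθ0 hθ1
  refine ⟨δ, hδ, squeeze_zero' (Eventually.of_forall fun L => probUnif_nonneg L _) ?_
    (by simpa only [mul_zero] using hlim.const_mul C)⟩
  filter_upwards [hk] with L hL
  refine le_trans (probUnif_mono ?_) (hprob L (k L))
  exact fun π ⟨i, hi, hnum, hcross⟩ => ⟨i, by exact_mod_cast hL.trans hi, hnum, hcross⟩
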